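/- Let M ∈ ℂ^{p×p} be invertible, let A ∈ ℂ^{n×n×p} be *_M-pseudo-positive-definite, and let k ≥ 1 be an integer. Then there exists a unique *_M-pseudo-positive-definite tensor B ∈ ℂ^{n×n×p} such that the k-fold product B *_M B *_M ⋯ *_M B (k factors) equals A. -/

import Mathlib

open Matrix
open scoped ComplexOrder

attribute [local instance] Classical.propDecidable

noncomputable section

/-- Mode-3 product of a third-order complex tensor (stack of `p` frontal slices)
with a matrix `M ∈ ℂ^{q×p}`: `(A ×₃ M)ₖ = Σ_l M k l • A l`. -/
def mode3 {m n p q : ℕ} (M : Matrix (Fin q) (Fin p) ℂ)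
    (A : Fin p → Matrix (Fin m) (Fin n) ℂ) : Fin q → Matrix (Fin m) (Fin n) ℂ :=
  fun k => ∑ l, M k l • A l

/-- Face-wise product of two third-order tensors. -/
def facewise {m n s p : ℕ} (A : Fin p → Matrix (Fin m) (Fin n) ℂ)
    (B : Fin p → Matrix (Fin n) (Fin s) ℂ) : Fin p → Matrix (Fin m) (Fin s) ℂ :=
  fun i => A i * B i

/-- Tensor-tensor multiplication with an invertible `M ∈ ℂ^{p×p}`:
`A *_M B = ((A ×₃ M) △ (B ×₃ M)) ×₃ M⁻¹`. -/
def tmul3 {m n s p : ℕ} (M : Matrix (Fin p) (Fin p) ℂ)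
    (A : Fin p → Matrix (Fin m) (Fin n) ℂ) (B : Fin p → Matrix (Fin n) (Fin s) ℂ) :
    Fin p → Matrix (Fin m) (Fin s) ℂ :=
  mode3 M⁻¹ (facewise (mode3 M A) (mode3 M B))

/-- `A ∈ ℂ^{n×n×p}` is `*_M`-pseudo-positive-definite if every frontal slice of
`A ×₃ M` is (Hermitian) positive-definite. -/
def PseudoPD {n p : ℕ} (M : Matrix (Fin p) (Fin p) ℂ)
    (A : Fin p → Matrix (Fin n) (Fin n) ℂ) : Prop :=
  ∀ i, (mode3 M A i).PosDef

/-- The `*_M`-identity tensor: all frontal slices of `I ×₃ M` equal `I_n`. -/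
def tId {p : ℕ} (n : ℕ) (M : Matrix (Fin p) (Fin p) ℂ) :
    Fin p → Matrix (Fin n) (Fin n) ℂ :=
  mode3 M⁻¹ (fun _ => 1)

/-- The `*_M`-inverse of a tensor (the unique two-sided inverse when it exists). -/
def tinv {n p : ℕ} (M : Matrix (Fin p) (Fin p) ℂ)
    (A : Fin p → Matrix (Fin n) (Fin n) ℂ) : Fin p → Matrix (Fin n) (Fin n) ℂ :=
  if h : ∃ X, tmul3 M A X = tId n M ∧ tmul3 M X A = tId n M then h.choose else 0

/-- The `*_M`-pseudo-positive-definite square root of a tensor (the unique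
pseudo-positive-definite `B` with `B *_M B = A`, when it uniquely exists). -/
def tsqrt {n p : ℕ} (M : Matrix (Fin p) (Fin p) ℂ)
    (A : Fin p → Matrix (Fin n) (Fin n) ℂ) : Fin p → Matrix (Fin n) (Fin n) ℂ :=
  if h : ∃! B, PseudoPD M B ∧ tmul3 M B B = A then h.choose else 0

/-- The tensor geometric mean
`A #_M B = A^{1/2} *_M (A^{−1/2} *_M B *_M A^{−1/2})^{1/2} *_M A^{1/2}`,
where `A^{−1/2} = (A^{1/2})⁻¹`. -/
def geomean {n p : ℕ} (M : Matrix (Fin p) (Fin p) ℂ)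
    (A B : Fin p → Matrix (Fin n) (Fin n) ℂ) : Fin p → Matrix (Fin n) (Fin n) ℂ :=
  tmul3 M (tmul3 M (tsqrt M A)
    (tsqrt M (tmul3 M (tmul3 M (tinv M (tsqrt M A)) B) (tinv M (tsqrt M A)))))
    (tsqrt M A)

end

/-- `kfold M B k` is the `(k+1)`-fold product `B *_M B *_M ⋯ *_M B` (`k+1` factors). -/
noncomputable def kfold {n p : ℕ} (M : Matrix (Fin p) (Fin p) ℂ)
    (B : Fin p → Matrix (Fin n) (Fin n) ℂ) : ℕ → (Fin p → Matrix (Fin n) (Fin n) ℂ)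
  | 0 => B
  | k + 1 => tmul3 M (kfold M B k) B

open scoped MatrixOrder

theorem mode3_mode3 {m n p q r : ℕ} (N : Matrix (Fin r) (Fin q) ℂ) (M : Matrix (Fin q) (Fin p) ℂ)
    (A : Fin p → Matrix (Fin m) (Fin n) ℂ) : mode3 N (mode3 M A) = mode3 (N * M) A := by
  funext k
  simp only [mode3, Matrix.mul_apply, Finset.smul_sum, Finset.sum_smul, smul_smul]
  exact Finset.sum_comm

theorem mode3_one {m n p : ℕ} (A : Fin p → Matrix (Fin m) (Fin n) ℂ) : mode3 1 A = A := by
  funext k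
  simp [mode3, Matrix.one_apply, ite_smul]

theorem mode3_mode3_inv {m n p : ℕ} {M : Matrix (Fin p) (Fin p) ℂ} (hM : IsUnit M.det)
    (A : Fin p → Matrix (Fin m) (Fin n) ℂ) : mode3 M (mode3 M⁻¹ A) = A := by
  rw [mode3_mode3, Matrix.mul_nonsing_inv M hM, mode3_one]

theorem mode3_injective {m n p : ℕ} {M : Matrix (Fin p) (Fin p) ℂ} (hM : IsUnit M.det) :
    Function.Injective (mode3 (m := m) (n := n) M) := by
  refine Function.LeftInverse.injective (g := mode3 M⁻¹) fun A => ?_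
  rw [mode3_mode3, Matrix.nonsing_inv_mul M hM, mode3_one]

/-- In the transform domain, the `(k+1)`-fold product is the slicewise matrix power. -/
theorem mode3_kfold {n p : ℕ} {M : Matrix (Fin p) (Fin p) ℂ} (hM : IsUnit M.det)
    (B : Fin p → Matrix (Fin n) (Fin n) ℂ) (k : ℕ) (i : Fin p) :
    mode3 M (kfold M B k) i = mode3 M B i ^ (k + 1) := by
  induction k with
  | zero => simp [kfold]
  | succ k ih =>
    rw [kfold, tmul3, mode3_mode3_inv hM, facewise, ih, ← pow_succ]

theorem Matrix.PosDef.exists_posDef_pow_eq {n : ℕ} {S : Matrix (Fin n) (Fin n) ℂ} (hS : S.PosDef)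
    {k : ℕ} (hk : k ≠ 0) : ∃ T : Matrix (Fin n) (Fin n) ℂ, T.PosDef ∧ T ^ k = S := by
  have hS' : IsStrictlyPositive S := hS.isStrictlyPositive
  refine ⟨CFC.rpow S (k : ℝ)⁻¹, (IsStrictlyPositive.rpow S _ hS').posDef, ?_⟩
  rw [CFC.rpow_eq_pow, ← CFC.rpow_natCast _ k CFC.rpow_nonneg,
    CFC.rpow_inv_rpow S _ (by exact_mod_cast hk) hS']

theorem Matrix.PosDef.eq_of_pow_eq_pow {n : ℕ} {S T : Matrix (Fin n) (Fin n) ℂ} (hS : S.PosDef)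
    (hT : T.PosDef) {k : ℕ} (hk : k ≠ 0) (h : S ^ k = T ^ k) : S = T := by
  have hS' : IsStrictlyPositive S := hS.isStrictlyPositive
  have hT' : IsStrictlyPositive T := hT.isStrictlyPositive
  have hk' : (k : ℝ) ≠ 0 := by exact_mod_cast hk
  rw [← CFC.rpow_rpow_inv S _ hk' hS', ← CFC.rpow_rpow_inv T _ hk' hT',
    CFC.rpow_natCast S k hS'.nonneg, CFC.rpow_natCast T k hT'.nonneg, h]

/-- for invertible `M ∈ ℂ^{p×p}`, a `*_M`-pseudo-positive-definite
`A ∈ ℂ^{n×n×p}` and an integer `k ≥ 1`, there exists a unique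
`*_M`-pseudo-positive-definite `B` whose `k`-fold `*_M`-product equals `A`. -/
theorem pseudoPD_unique_kth_root {n p : ℕ} (M : Matrix (Fin p) (Fin p) ℂ)
    (hM : IsUnit M.det) (A : Fin p → Matrix (Fin n) (Fin n) ℂ) (hA : PseudoPD M A)
    (k : ℕ) (hk : 1 ≤ k) :
    ∃! B : Fin p → Matrix (Fin n) (Fin n) ℂ,
      PseudoPD M B ∧ kfold M B (k - 1) = A := by
  obtain ⟨k, rfl⟩ : ∃ j, k = j + 1 := ⟨k - 1, by omega⟩
  rw [Nat.add_sub_cancel]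
  choose T hT hTA using fun i => (hA i).exists_posDef_pow_eq k.succ_ne_zero
  refine ⟨mode3 M⁻¹ T, ⟨fun i => ?_, mode3_injective hM <| funext fun i => ?_⟩, ?_⟩
  · rw [mode3_mode3_inv hM]
    exact hT i
  · rw [mode3_kfold hM, mode3_mode3_inv hM]
    exact hTA i
  · rintro B ⟨hB, hBA⟩
    refine mode3_injective hM <| funext fun i => ?_
    rw [mode3_mode3_inv hM]
    refine (hB i).eq_of_pow_eq_pow (hT i) k.succ_ne_zero ?_
    rw [hTA i, ← hBA, Nat.succ_eq_add_one, mode3_kfold hM]
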